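/- Under these hypotheses, every proper complementary interval I contains exactly one critical point ω of G; moreover this critical point is simple and is a strict local maximum of G along ℝ: the second derivative at t = 0 of the real function t ↦ G(ω + t) is strictly negative. -/

import Mathlib

open Metric Set Complex

/-- A real-valued function is harmonic on an open subset of `ℂ ≅ ℝ²` if it is
C² there and its Laplacian vanishes. -/
def IsHarmonicOn (G : ℂ → ℝ) (U : Set ℂ) : Prop :=
  ContDiffOn ℝ 2 G U ∧ ∀ z ∈ U,
    fderiv ℝ (fun w => fderiv ℝ G w 1) z 1 +
      fderiv ℝ (fun w => fderiv ℝ G w Complex.I) z Complex.I = 0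

open Filter Topology InnerProductSpace Laplacian ComplexConjugate

/-!
Let `a` be a real point of `Ω` off `E`, and suppose that for every small `ε > 0` the function
`H z = G z + ε * Re (z - a) ^ 2`, harmonic off `E`, had a strict local minimum at `a` along `ℝ`.
Take `c` slightly above `H a`, and let `V` be the component of `a` in `{H < c}`. By the minimum
principle `V` meets `E` at some `e`. Since `V` is symmetric about the real axis and reaches `e`, it
ought to enclose one of the ridge points `q` with `H q > c` between `a` and `e`; but by the maximum
principle each ridge point can be joined to the complement of `Ω` outside `V`, so that, `Ω` being
simply connected, `z - q` has a logarithm on `V`. Comparing this logarithm with its conjugate shows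
that `a` and `e` lie on the same side of `q`, a contradiction.

Hence `G t + ε * (t - a) ^ 2 ≤ G a` for points `t ≠ a` arbitrarily close to `a`, so that `G'' < 0`
at every critical point of `G` along `ℝ`. Two such points in one interval would be separated by a
minimum, while a maximum exists since `G` is positive on the interval and vanishes at its ends.
-/

lemma disjoint_frontier_connectedComponentIn {X : Type*} [TopologicalSpace X]
    [LocallyConnectedSpace X] {S : Set X} (hS : IsOpen S) (x : X) :
    Disjoint (frontier (connectedComponentIn S x)) S := by
  refine disjoint_left.2 fun z hz hzS ↦ ?_
  rw [hS.connectedComponentIn.frontier_eq] at hz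
  obtain ⟨y, hyz, hyx⟩ :=
    mem_closure_iff.1 hz.1 _ hS.connectedComponentIn (mem_connectedComponentIn hzS)
  apply hz.2
  rw [connectedComponentIn_eq hyx, ← connectedComponentIn_eq hyz]
  exact mem_connectedComponentIn hzS

lemma image_connectedComponentIn_preimage {X Y : Type*} [TopologicalSpace X] [TopologicalSpace Y]
    {f : X → Y} (hf : IsInducing f) {S : Set Y} (hS : S ⊆ range f) {a : X} (ha : f a ∈ S) :
    f '' connectedComponentIn (f ⁻¹' S) a = connectedComponentIn S (f a) := by
  refine Subset.antisymm ?_ ?_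
  · exact (hf.continuous.continuousOn.image_connectedComponentIn_subset ha).trans
      (connectedComponentIn_mono _ (image_preimage_subset f S))
  · have image_preimage :
        f '' (f ⁻¹' connectedComponentIn S (f a)) = connectedComponentIn S (f a) :=
      image_preimage_eq_of_subset ((connectedComponentIn_subset _ _).trans hS)
    rw [← image_preimage]
    refine image_mono (IsPreconnected.subset_connectedComponentIn ?_
      (mem_connectedComponentIn ha) (preimage_mono (connectedComponentIn_subset _ _)))
    exact hf.isPreconnected_image.1
      (image_preimage.symm.subst isPreconnected_connectedComponentIn)

lemma exists_pos_forall_abs_mul_lt {X : Type*} [TopologicalSpace X] {K : Set X} {f : X → ℝ} {δ : ℝ}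
    (hK : IsCompact K) (hf : ContinuousOn f K) (hδ : 0 < δ) :
    ∃ ε > 0, ∀ x ∈ K, |ε * f x| < δ := by
  obtain ⟨C, hC⟩ := hK.exists_bound_of_continuousOn hf
  have C_lt : C < |C| + 1 := (le_abs_self C).trans_lt (lt_add_one _)
  have pos : 0 < |C| + 1 := by positivity
  refine ⟨δ / (|C| + 1), div_pos hδ pos, fun x hx ↦ ?_⟩
  rw [abs_mul, abs_of_pos (div_pos hδ pos), div_mul_eq_mul_div, div_lt_iff₀ pos]
  exact mul_lt_mul_of_pos_left ((hC x hx).trans_lt C_lt) hδ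

section LinearIsometry

variable {V W F : Type*} [NormedAddCommGroup V] [InnerProductSpace ℝ V] [FiniteDimensional ℝ V]
  [NormedAddCommGroup W] [InnerProductSpace ℝ W] [FiniteDimensional ℝ W]
  [NormedAddCommGroup F] [NormedSpace ℝ F]

lemma laplacian_comp_linearIsometryEquiv (f : W → F) (l : V ≃ₗᵢ[ℝ] W) :
    Δ (f ∘ l) = Δ f ∘ l := by
  ext x
  let v := stdOrthonormalBasis ℝ V
  have iterated_comp : iteratedFDeriv ℝ 2 (f ∘ l) x
      = (iteratedFDeriv ℝ 2 f (l x)).compContinuousLinearMap fun _ ↦ (l : V →L[ℝ] W) := by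
    simpa [iteratedFDerivWithin_univ] using!
      l.toContinuousLinearEquiv.iteratedFDerivWithin_comp_right f uniqueDiffOn_univ
        (mem_univ (l x)) 2
  rw [laplacian_eq_iteratedFDeriv_orthonormalBasis _ v, Function.comp_apply,
    laplacian_eq_iteratedFDeriv_orthonormalBasis f (v.map l)]
  refine Finset.sum_congr rfl fun i _ ↦ ?_
  rw [iterated_comp, ContinuousMultilinearMap.compContinuousLinearMap_apply]
  congr 1
  ext j
  fin_cases j <;> simp

lemma harmonicAt_comp_linearIsometryEquiv {f : W → F} (l : V ≃ₗᵢ[ℝ] W) {x : V}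
    (hf : HarmonicAt f (l x)) : HarmonicAt (f ∘ l) x := by
  refine ⟨hf.1.comp x l.contDiff.contDiffAt, ?_⟩
  rw [laplacian_comp_linearIsometryEquiv]
  exact l.continuous.continuousAt.eventually hf.2

end LinearIsometry

lemma IsHarmonicOn.harmonicOnNhd {u : ℂ → ℝ} {U : Set ℂ} (hu : IsHarmonicOn u U)
    (hU : IsOpen U) : HarmonicOnNhd u U := by
  intro z hz
  have smooth : ∀ w ∈ U, ContDiffAt ℝ 2 u w := fun w hw ↦ hu.1.contDiffAt (hU.mem_nhds hw)
  refine ⟨smooth z hz, ?_⟩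
  filter_upwards [hU.mem_nhds hz] with w hw
  have differentiable_fderiv : DifferentiableAt ℝ (fderiv ℝ u) w :=
    ((smooth w hw).fderiv_right (m := 1) (by norm_num)).differentiableAt one_ne_zero
  have fderiv_apply (v : ℂ) :
      fderiv ℝ (fun y ↦ fderiv ℝ u y v) w v = fderiv ℝ (fderiv ℝ u) w v v := by
    rw [fderiv_clm_apply differentiable_fderiv (differentiableAt_const v)]
    simp
  have laplace_eq := hu.2 w hw
  rw [fderiv_apply, fderiv_apply] at laplace_eq
  simpa [laplacian_eq_iteratedFDeriv_complexPlane, iteratedFDeriv_two_apply] using laplace_eq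

/-! ### Maximum principles -/

lemma eventually_eq_of_isLocalMax_of_harmonicAt {u : ℂ → ℝ} {z : ℂ} (hu : HarmonicAt u z)
    (hmax : IsLocalMax u z) : ∀ᶠ w in 𝓝 z, u w = u z := by
  obtain ⟨r, hr, harmonic_ball⟩ := Metric.eventually_nhds_iff_ball.1 hu.eventually
  obtain ⟨F, hF, re_F⟩ := HarmonicOnNhd.exists_analyticOnNhd_ball_re_eq harmonic_ball
  have ball_mem : ball z r ∈ 𝓝 z := ball_mem_nhds z hr
  have norm_exp : ∀ w ∈ ball z r, ‖exp (F w)‖ = Real.exp (u w) := fun w hw ↦ by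
    rw [Complex.norm_exp]; exact congrArg Real.exp (re_F hw)
  have z_mem := mem_ball_self (x := z) hr
  have isLocalMax_norm_exp : IsLocalMax (norm ∘ fun w ↦ exp (F w)) z := by
    filter_upwards [hmax, ball_mem] with w hw hwr
    simpa [Function.comp, norm_exp w hwr, norm_exp z z_mem] using hw
  have differentiable_exp : ∀ᶠ w in 𝓝 z, DifferentiableAt ℂ (fun w ↦ exp (F w)) w := by
    filter_upwards [ball_mem] with w hw using (hF w hw).differentiableAt.cexp
  filter_upwards [eventually_eq_of_isLocalMax_norm differentiable_exp isLocalMax_norm_exp,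
    ball_mem] with w hw hwr
  apply Real.exp_injective
  rw [← norm_exp w hwr, hw, norm_exp z z_mem]

section MaximumPrinciple

variable {U E : Set ℂ} {u : ℂ → ℝ} {M : ℝ}

lemma isOpen_setOf_eq_of_harmonicOnNhd_of_le (hU : IsOpen U) (hu : HarmonicOnNhd u (U \ E))
    (hE : ∀ z ∈ U ∩ E, u z < M) (hle : ∀ z ∈ U, u z ≤ M) : IsOpen {z ∈ U | u z = M} := by
  refine isOpen_iff_mem_nhds.2 fun z ⟨hz, z_eq⟩ ↦ ?_
  have z_notMem : z ∉ E := fun hzE ↦ (hE z ⟨hz, hzE⟩).ne z_eq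
  have hmax : IsLocalMax u z := by
    filter_upwards [hU.mem_nhds hz] with w hw using (hle w hw).trans_eq z_eq.symm
  filter_upwards [eventually_eq_of_isLocalMax_of_harmonicAt (hu z ⟨hz, z_notMem⟩) hmax,
    hU.mem_nhds hz] with w hw hwU using ⟨hwU, hw.trans z_eq⟩

lemma lt_of_harmonicOnNhd_of_le (hU : IsOpen U) (hUc : IsPreconnected U)
    (hcont : ContinuousOn u U) (hu : HarmonicOnNhd u (U \ E)) (hE : ∀ z ∈ U ∩ E, u z < M)
    (hle : ∀ z ∈ U, u z ≤ M) (hlt : ∃ z ∈ U, u z < M) : ∀ z ∈ U, u z < M := by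
  have disjoint : Disjoint (U ∩ u ⁻¹' Iio M) {z ∈ U | u z = M} :=
    disjoint_left.2 fun z hz hz' ↦ hz.2.ne hz'.2
  have cover : U ⊆ (U ∩ u ⁻¹' Iio M) ∪ {z ∈ U | u z = M} := fun z hz ↦
    (hle z hz).lt_or_eq.imp (⟨hz, ·⟩) (⟨hz, ·⟩)
  obtain ⟨z₀, hz₀, lt₀⟩ := hlt
  exact fun z hz ↦ (hUc.subset_left_of_subset_union (hcont.isOpen_inter_preimage hU isOpen_Iio)
    (isOpen_setOf_eq_of_harmonicOnNhd_of_le hU hu hE hle) disjoint cover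
    ⟨z₀, hz₀, hz₀, lt₀⟩ hz).2

lemma le_of_harmonicOnNhd_of_frontier_le (hU : IsOpen U) (hb : Bornology.IsBounded U)
    (hcont : ContinuousOn u (closure U)) (hu : HarmonicOnNhd u (U \ E))
    (hE : ∀ z ∈ U ∩ E, u z ≤ M) (hfr : ∀ z ∈ frontier U, u z ≤ M) : ∀ z ∈ U, u z ≤ M := by
  intro z hz
  obtain ⟨m, hm, hmax⟩ := hb.isCompact_closure.exists_isMaxOn ⟨z, subset_closure hz⟩ hcont
  by_contra! hlt
  have M_lt : M < u m := hlt.trans_le (hmax (subset_closure hz))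
  have isOpen_max : IsOpen {w ∈ U | u w = u m} :=
    isOpen_setOf_eq_of_harmonicOnNhd_of_le hU hu (fun w hw ↦ (hE w hw).trans_lt M_lt)
      fun w hw ↦ hmax (subset_closure hw)
  have max_eq : {w ∈ U | u w = u m} = closure U ∩ u ⁻¹' {u m} := by
    refine Subset.antisymm (inter_subset_inter_left _ subset_closure) fun w ⟨hw, w_eq⟩ ↦
      ⟨by_contra fun hwU ↦ M_lt.not_ge ?_, w_eq⟩
    exact (mem_singleton_iff.1 w_eq).symm.trans_le (hfr w (hU.frontier_eq ▸ ⟨hw, hwU⟩))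
  have isClosed_max : IsClosed {w ∈ U | u w = u m} :=
    max_eq ▸ hcont.preimage_isClosed_of_isClosed isClosed_closure isClosed_singleton
  have max_eq_univ := IsClopen.eq_univ ⟨isClosed_max, isOpen_max⟩
    (max_eq ▸ ⟨m, hm, mem_singleton _⟩)
  exact NormedSpace.unbounded_univ ℝ ℂ (max_eq_univ ▸ hb.subset (sep_subset U _))

lemma le_of_harmonicOnNhd_of_le_frontier (hU : IsOpen U) (hb : Bornology.IsBounded U)
    (hcont : ContinuousOn u (closure U)) (hu : HarmonicOnNhd u (U \ E))
    (hE : ∀ z ∈ U ∩ E, M ≤ u z) (hfr : ∀ z ∈ frontier U, M ≤ u z) : ∀ z ∈ U, M ≤ u z :=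
  fun z hz ↦ neg_le_neg_iff.1 <| le_of_harmonicOnNhd_of_frontier_le hU hb hcont.neg hu.neg
    (fun w hw ↦ neg_le_neg (hE w hw)) (fun w hw ↦ neg_le_neg (hfr w hw)) z hz

end MaximumPrinciple

lemma interior_eq_empty_of_frontier_im_eq_zero {K : Set ℂ} (hK : IsCompact K)
    (hfr : ∀ z ∈ frontier K, z.im = 0) : interior K = ∅ := by
  have K_subset : K ⊆ im ⁻¹' {0} := by
    intro z hz
    obtain ⟨b, hb, le_b⟩ := hK.exists_isMaxOn ⟨z, hz⟩ continuous_im.continuousOn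
    obtain ⟨a, ha, a_le⟩ := hK.exists_isMinOn ⟨z, hz⟩ continuous_im.continuousOn
    have b_im : b.im = 0 := hfr b ⟨subset_closure hb, fun hbi ↦ by
      have : b ∈ interior {w : ℂ | w.im ≤ b.im} := interior_mono (fun w hw ↦ le_b hw) hbi
      simp [interior_setOfPred_im_le] at this⟩
    have a_im : a.im = 0 := hfr a ⟨subset_closure ha, fun hai ↦ by
      have : a ∈ interior {w : ℂ | a.im ≤ w.im} := interior_mono (fun w hw ↦ a_le hw) hai
      simp [interior_setOfPred_le_im] at this⟩
    exact le_antisymm (b_im ▸ le_b hz) (a_im ▸ a_le hz)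
  simpa [interior_preimage_im] using interior_mono K_subset

/-! ### Branches of the logarithm -/

lemma sub_eq_sub_of_exp_eq_exp {A : Type*} [TopologicalSpace A] [PreconnectedSpace A]
    {f g : A → ℂ} (hf : Continuous f) (hg : Continuous g) (h : ∀ a, exp (f a) = exp (g a))
    (a b : A) : f a - g a = f b - g b := by
  have g_add_eq_f : (fun x ↦ g x + (f a - g a)) = f :=
    isCoveringMap_exp.eq_of_comp_eq (hg.add continuous_const) hf
      (funext fun x ↦ Subtype.ext <| by simp [exp_add, exp_sub, h]) a (by simp)
  linear_combination congrFun g_add_eq_f b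

/-- `z - p` has a continuous logarithm on `V`: in the plane, `V` does not wind around `p`. -/
def HasLogBranch (V : Set ℂ) (p : ℂ) : Prop :=
  ∃ ℓ : V → ℂ, Continuous ℓ ∧ ∀ z : V, exp (ℓ z) = z - p

namespace HasLogBranch

variable {U V : Set ℂ} {p q : ℂ}

lemma mono (h : HasLogBranch U p) (hVU : V ⊆ U) : HasLogBranch V p := by
  obtain ⟨ℓ, hℓ, exp_ℓ⟩ := h
  exact ⟨ℓ ∘ inclusion hVU, hℓ.comp (continuous_inclusion hVU), fun z ↦ exp_ℓ _⟩

lemma of_isSimplyConnected (hU : IsSimplyConnected U) (hUo : IsOpen U) (hp : p ∉ U) :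
    HasLogBranch U p := by
  obtain ⟨ℓ, hℓ, exp_ℓ⟩ := exists_continuousOn_eqOn_exp_comp hU hUo (g := fun z ↦ z - p)
    (by fun_prop) (fun ⟨z, hz, h⟩ ↦ hp (sub_eq_zero.1 h ▸ hz))
  exact ⟨U.domRestrict ℓ, hℓ.domRestrict, fun z ↦ exp_ℓ z.2⟩

/- A path `γ` from `p` to `q` outside `V` is a homotopy `z - γ t` between the two maps
`z - p` and `z - q` into the punctured plane, which lifts through `exp`. -/
lemma of_joinedIn (h : HasLogBranch V p) (hpq : JoinedIn Vᶜ p q) : HasLogBranch V q := by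
  obtain ⟨ℓ, hℓ, exp_ℓ⟩ := h
  obtain ⟨γ, hγ⟩ := hpq
  let homotopy : C(unitInterval × V, {z : ℂ // z ≠ 0}) :=
    ⟨fun x ↦ ⟨x.2 - γ x.1, sub_ne_zero.2 fun h ↦ hγ x.1 (h ▸ x.2.2)⟩, by fun_prop⟩
  have start : ∀ z, homotopy (0, z) = ⟨_, (ℓ z).exp_ne_zero⟩ := fun z ↦
    Subtype.ext <| by simp [homotopy, exp_ℓ]
  let lift := isCoveringMap_exp.liftHomotopy homotopy ⟨ℓ, hℓ⟩ start
  refine ⟨fun z ↦ lift (1, z), by fun_prop, fun z ↦ ?_⟩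
  have exp_lift :=
    congrFun (isCoveringMap_exp.liftHomotopy_lifts homotopy ⟨ℓ, hℓ⟩ start) (1, z)
  exact (congrArg Subtype.val exp_lift).trans (by simp [homotopy])

/- If `ℓ` is a logarithm of `z - q`, then so is `z ↦ conj (ℓ (conj z))`. The two differ by a
constant, so `Im ℓ` takes the same value at all real points. -/
lemma sub_mul_sub_pos (hV : IsPreconnected V) (hconj : MapsTo conj V V) {q u v : ℝ}
    (hq : HasLogBranch V q) (hu : (u : ℂ) ∈ V) (hv : (v : ℂ) ∈ V) : 0 < (u - q) * (v - q) := by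
  obtain ⟨ℓ, hℓ, exp_ℓ⟩ := hq
  have := isPreconnected_iff_preconnectedSpace.1 hV
  let conjV : V → V := hconj.restrict conj V V
  have continuous_conj_ℓ : Continuous fun z ↦ conj (ℓ (conjV z)) := continuous_conj.comp
    (hℓ.comp (continuous_conj.continuousOn.mapsToRestrict hconj))
  have exp_conj_ℓ (z : V) : exp (ℓ z) = exp (conj (ℓ (conjV z))) := by
    rw [exp_conj, exp_ℓ, exp_ℓ]
    simp [conjV]
  have conjV_ofReal (t : ℝ) (ht : (t : ℂ) ∈ V) : conjV ⟨t, ht⟩ = ⟨t, ht⟩ :=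
    Subtype.ext (conj_ofReal t)
  have diff_eq : ℓ ⟨u, hu⟩ - conj (ℓ ⟨u, hu⟩) = ℓ ⟨v, hv⟩ - conj (ℓ ⟨v, hv⟩) := by
    simpa only [conjV_ofReal] using
      sub_eq_sub_of_exp_eq_exp hℓ continuous_conj_ℓ exp_conj_ℓ ⟨u, hu⟩ ⟨v, hv⟩
  have conj_fixed : conj (ℓ ⟨u, hu⟩ + conj (ℓ ⟨v, hv⟩)) = ℓ ⟨u, hu⟩ + conj (ℓ ⟨v, hv⟩) := by
    simp only [map_add, conj_conj]
    linear_combination -diff_eq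
  obtain ⟨r, hr⟩ := conj_eq_iff_real.1 conj_fixed
  have mul_eq : ((u - q) * (v - q) : ℝ) = Real.exp r := by
    apply ofReal_injective
    rw [ofReal_exp, ← hr, exp_add, exp_conj, exp_ℓ, exp_ℓ]
    simp
  exact mul_eq ▸ Real.exp_pos r

end HasLogBranch

/-! ### Valleys along the real axis -/

section Valley

variable {Ω E : Set ℂ} {H : ℂ → ℝ} {c : ℝ}

/- Otherwise the component of `q` in the complement of `closure V` would lie in `Ω`, and `H ≤ c`
on its frontier. -/
lemma exists_notMem_joinedIn_compl_of_lt (hb : Bornology.IsBounded Ω)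
    (hcont : ContinuousOn H (closure Ω)) (hH : HarmonicOnNhd H (Ω \ E))
    (hE : ∀ z ∈ Ω ∩ E, H z ≤ c) {V : Set ℂ} (hVΩ : V ⊆ Ω) (hV : ∀ z ∈ V, H z ≤ c) {q : ℂ}
    (hq : c < H q) : ∃ p ∉ Ω, JoinedIn Vᶜ p q := by
  have closure_le : closure V ⊆ closure Ω ∩ H ⁻¹' Iic c :=
    closure_minimal (fun z hz ↦ ⟨subset_closure (hVΩ hz), hV z hz⟩)
      (hcont.preimage_isClosed_of_isClosed isClosed_closure isClosed_Iic)
  have q_mem : q ∈ (closure V)ᶜ := fun h ↦ hq.not_ge (closure_le h).2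
  have isOpen_compl : IsOpen (closure V)ᶜ := isClosed_closure.isOpen_compl
  set N := connectedComponentIn (closure V)ᶜ q
  have q_mem_N : q ∈ N := mem_connectedComponentIn q_mem
  have isOpen_N : IsOpen N := isOpen_compl.connectedComponentIn
  have isPathConnected_N : IsPathConnected N := isOpen_N.isConnected_iff_isPathConnected.1
    (isConnected_connectedComponentIn_iff.2 q_mem)
  have N_subset : N ⊆ Vᶜ :=
    (connectedComponentIn_subset _ _).trans (compl_subset_compl.2 subset_closure)
  by_contra! h
  have N_subset_Ω : N ⊆ Ω := fun p hp ↦ by_contra fun hpΩ ↦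
    h p hpΩ ((isPathConnected_N.joinedIn p hp q q_mem_N).mono N_subset)
  have frontier_le (z : ℂ) (hz : z ∈ frontier N) : H z ≤ c := by
    refine (closure_le (by_contra fun hzV ↦ ?_)).2
    exact disjoint_left.1 (disjoint_frontier_connectedComponentIn isOpen_compl q) hz hzV
  exact hq.not_ge <| le_of_harmonicOnNhd_of_frontier_le isOpen_N (hb.subset N_subset_Ω)
    (hcont.mono (closure_mono N_subset_Ω)) (hH.mono (sdiff_subset_sdiff_left N_subset_Ω))
    (fun z hz ↦ hE z ⟨N_subset_Ω hz.1, hz.2⟩) frontier_le q q_mem_N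

lemma connectedComponentIn_sublevel_inter_nonempty (hΩ : IsOpen Ω) (hb : Bornology.IsBounded Ω)
    (hcont : ContinuousOn H (closure Ω)) (hH : HarmonicOnNhd H (Ω \ E))
    (hfr : ∀ z ∈ frontier Ω, c ≤ H z) {x : ℂ} (hx : x ∈ Ω ∩ H ⁻¹' Iio c) :
    (connectedComponentIn (Ω ∩ H ⁻¹' Iio c) x ∩ E).Nonempty := by
  have isOpen_sublevel : IsOpen (Ω ∩ H ⁻¹' Iio c) :=
    (hcont.mono subset_closure).isOpen_inter_preimage hΩ isOpen_Iio
  set V := connectedComponentIn (Ω ∩ H ⁻¹' Iio c) x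
  have V_subset_Ω : V ⊆ Ω := (connectedComponentIn_subset _ _).trans inter_subset_left
  have le_frontier (z : ℂ) (hz : z ∈ frontier V) : c ≤ H z := by
    have notMem := disjoint_left.1 (disjoint_frontier_connectedComponentIn isOpen_sublevel x) hz
    by_cases hzΩ : z ∈ Ω
    · exact not_lt.1 fun hlt ↦ notMem ⟨hzΩ, hlt⟩
    · exact hfr z (hΩ.frontier_eq ▸ ⟨closure_mono V_subset_Ω hz.1, hzΩ⟩)
  by_contra hVE
  refine (mem_preimage.1 hx.2).not_ge <| le_of_harmonicOnNhd_of_le_frontier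
    isOpen_sublevel.connectedComponentIn (hb.subset V_subset_Ω)
    (hcont.mono (closure_mono V_subset_Ω)) (hH.mono (sdiff_subset_sdiff_left V_subset_Ω))
    (fun z hz ↦ (hVE ⟨z, hz⟩).elim) le_frontier x (mem_connectedComponentIn hx)

/-- The domains of the condensers considered here: bounded simply connected open sets symmetric
about the real axis. -/
structure IsConjInvariantDomain (Ω : Set ℂ) : Prop where
  isOpen : IsOpen Ω
  isBounded : Bornology.IsBounded Ω
  isSimplyConnected : IsSimplyConnected Ω
  mapsTo_conj : MapsTo conj Ω Ω

lemma exists_mem_Ioo_of_valley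
    (hΩ : IsConjInvariantDomain Ω) (hEreal : ∀ z ∈ E, z.im = 0) (hcont : ContinuousOn H (closure Ω))
    (hH : HarmonicOnNhd H (Ω \ E)) (hHconj : ∀ z ∈ Ω, H (conj z) = H z)
    (hE : ∀ z ∈ Ω ∩ E, H z ≤ c) (hfr : ∀ z ∈ frontier Ω, c ≤ H z)
    {x₁ x₂ x₃ : ℝ} (h₁₂ : x₁ < x₂) (h₂₃ : x₂ < x₃) (hx₂ : (x₂ : ℂ) ∈ Ω) (h₁ : c < H x₁)
    (h₂ : H x₂ < c) (h₃ : c < H x₃) : ∃ e ∈ Ioo x₁ x₃, (e : ℂ) ∈ E := by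
  set V := connectedComponentIn (Ω ∩ H ⁻¹' Iio c) x₂
  have sublevel_mem : (x₂ : ℂ) ∈ Ω ∩ H ⁻¹' Iio c := ⟨hx₂, h₂⟩
  have V_subset : V ⊆ Ω ∩ H ⁻¹' Iio c := connectedComponentIn_subset _ _
  have x₂_mem : (x₂ : ℂ) ∈ V := mem_connectedComponentIn sublevel_mem
  have V_conj : MapsTo conj V V := by
    have sublevel_conj : MapsTo conj (Ω ∩ H ⁻¹' Iio c) (Ω ∩ H ⁻¹' Iio c) :=
      fun z hz ↦ ⟨hΩ.mapsTo_conj hz.1, (hHconj z hz.1).trans_lt hz.2⟩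
    have := continuous_conj.continuousOn.mapsTo_connectedComponentIn sublevel_mem
    rw [conj_ofReal] at this
    exact this.mono_right (connectedComponentIn_mono _ sublevel_conj.image_subset)
  obtain ⟨z, hzV, hzE⟩ :=
    connectedComponentIn_sublevel_inter_nonempty hΩ.isOpen hΩ.isBounded hcont hH hfr sublevel_mem
  obtain ⟨e, rfl⟩ : ∃ e : ℝ, (e : ℂ) = z := ⟨z.re, Complex.ext rfl (hEreal z hzE).symm⟩
  have same_side (q : ℝ) (hq : c < H q) : 0 < (x₂ - q) * (e - q) := by
    obtain ⟨p, hp, joined⟩ := exists_notMem_joinedIn_compl_of_lt hΩ.isBounded hcont hH hE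
      (V_subset.trans inter_subset_left) (fun z hz ↦ (V_subset hz).2.le) hq
    have log_Ω := HasLogBranch.of_isSimplyConnected hΩ.isSimplyConnected hΩ.isOpen hp
    exact ((log_Ω.mono (V_subset.trans inter_subset_left)).of_joinedIn joined).sub_mul_sub_pos
      isPreconnected_connectedComponentIn V_conj x₂_mem hzV
  exact ⟨e, ⟨by nlinarith [same_side x₁ h₁], by nlinarith [same_side x₃ h₃]⟩, hzE⟩

lemma frequently_le_of_forall_mem_le
    (hΩ : IsConjInvariantDomain Ω) (hEreal : ∀ z ∈ E, z.im = 0) (hcont : ContinuousOn H (closure Ω))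
    (hH : HarmonicOnNhd H (Ω \ E)) (hHconj : ∀ z ∈ Ω, H (conj z) = H z)
    (hEc : IsClosed E) {a M : ℝ} (ha : (a : ℂ) ∈ Ω \ E)
    (hE : ∀ z ∈ Ω ∩ E, H z ≤ H a) (hfr : ∀ z ∈ frontier Ω, M ≤ H z) (haM : H a < M) :
    ∃ᶠ t : ℝ in 𝓝[≠] a, H t ≤ H a := by
  intro lt_near
  simp only [not_le] at lt_near
  have notMem_near : ∀ᶠ t : ℝ in 𝓝 a, (t : ℂ) ∉ E :=
    continuous_ofReal.continuousAt.eventually (hEc.isOpen_compl.mem_nhds ha.2)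
  obtain ⟨l, u, ⟨hl, hu⟩, near⟩ := mem_nhds_iff_exists_Ioo_subset.1
    ((eventually_nhdsWithin_iff.1 lt_near).and notMem_near)
  obtain ⟨x₁, hlx₁, hx₁a⟩ := exists_between hl
  obtain ⟨x₃, hax₃, hx₃u⟩ := exists_between hu
  have lt₁ : H a < H x₁ := (near ⟨hlx₁, hx₁a.trans hu⟩).1 hx₁a.ne
  have lt₃ : H a < H x₃ := (near ⟨hl.trans hax₃, hx₃u⟩).1 hax₃.ne'
  obtain ⟨c, hac, hc⟩ := exists_between (lt_min haM (lt_min lt₁ lt₃))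
  obtain ⟨hcM, hc₁, hc₃⟩ : c < M ∧ c < H x₁ ∧ c < H x₃ := by simpa using hc
  obtain ⟨e, ⟨hx₁e, hex₃⟩, heE⟩ := exists_mem_Ioo_of_valley hΩ hEreal hcont hH hHconj
    (fun z hz ↦ (hE z hz).trans hac.le) (fun z hz ↦ hcM.le.trans (hfr z hz)) hx₁a hax₃ ha.1
    hc₁ hac hc₃
  exact (near ⟨hlx₁.trans hx₁e, hex₃.trans hx₃u⟩).2 heE

end Valley

/-! ### Second derivatives at critical points -/

lemma deriv_deriv_comp_const_add {𝕜 F : Type*} [NontriviallyNormedField 𝕜] [NormedAddCommGroup F]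
    [NormedSpace 𝕜 F] (f : 𝕜 → F) (a t : 𝕜) :
    deriv (deriv fun s ↦ f (a + s)) t = deriv (deriv f) (a + t) := by
  simpa [iteratedDeriv_eq_iterate] using congrFun (iteratedDeriv_comp_const_add 2 f a) t

section RealVariable

variable {f : ℝ → ℝ}

lemma eventually_add_mul_sq_le_of_deriv_deriv_gt {a c : ℝ} (hf : ContDiffAt ℝ 2 f a)
    (hd : deriv f a = 0) (hc : 2 * c < deriv (deriv f) a) :
    ∀ᶠ t in 𝓝 a, f a + c * (t - a) ^ 2 ≤ f t := by
  let g : ℝ → ℝ := fun t ↦ f t - c * (t - a) ^ 2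
  have differentiable_near : ∀ᶠ t in 𝓝 a, DifferentiableAt ℝ f t :=
    (hf.eventually (by simp)).mono fun t ht ↦ ht.differentiableAt two_ne_zero
  have deriv_g : deriv g =ᶠ[𝓝 a] fun t ↦ deriv f t - 2 * c * (t - a) := by
    filter_upwards [differentiable_near] with t ht
    have := ht.hasDerivAt.sub ((((hasDerivAt_id t).sub_const a).pow 2).const_mul c)
    exact this.deriv.trans (by simp; ring)
  have deriv_deriv_g : deriv (deriv g) a = deriv (deriv f) a - 2 * c := by
    have := ((hf.derivWithin (m := 1) one_add_one_eq_two.le).differentiableAt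
      one_ne_zero).hasDerivAt.sub (((hasDerivAt_id a).sub_const a).const_mul (2 * c))
    rw [deriv_g.deriv_eq]
    exact this.deriv.trans (by simp)
  have isLocalMin_g : IsLocalMin g a := isLocalMin_of_deriv_deriv_pos
    (by linarith) (by simp [deriv_g.eq_of_nhds, hd]) (hf.continuousAt.sub (by fun_prop))
  filter_upwards [isLocalMin_g] with t ht
  simp only [g, sub_self] at ht
  linarith

lemma eventually_lt_of_deriv_deriv_neg {a : ℝ} (hf : ContDiffAt ℝ 2 f a) (hd : deriv f a = 0)
    (hneg : deriv (deriv f) a < 0) : ∀ᶠ t in 𝓝[≠] a, f t < f a := by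
  have quadratic_le := eventually_add_mul_sq_le_of_deriv_deriv_gt (c := -deriv (deriv f) a / 4)
    hf.neg (by simp [hd]) (by simp; linarith)
  filter_upwards [quadratic_le.filter_mono nhdsWithin_le_nhds, self_mem_nhdsWithin] with t ht hta
  have : 0 < (t - a) ^ 2 := by have := sub_ne_zero.2 hta; positivity
  nlinarith

lemma subsingleton_deriv_eq_zero_of_deriv_deriv_neg {J : Set ℝ} (hJ : J.OrdConnected)
    (hf : ∀ t ∈ J, ContDiffAt ℝ 2 f t)
    (hneg : ∀ t ∈ J, deriv f t = 0 → deriv (deriv f) t < 0) :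
    {t ∈ J | deriv f t = 0}.Subsingleton := by
  rintro u ⟨huJ, hu⟩ v ⟨hvJ, hv⟩
  by_contra hne
  wlog huv : u < v generalizing u v
  · exact this hvJ hv huJ hu (Ne.symm hne) ((lt_or_gt_of_ne hne).resolve_left huv)
  have Icc_subset : Icc u v ⊆ J := hJ.out huJ hvJ
  obtain ⟨m, hm, hmin⟩ := isCompact_Icc.exists_isMinOn (nonempty_Icc.2 huv.le)
    fun t ht ↦ (hf t (Icc_subset ht)).continuousAt.continuousWithinAt
  have deriv_m : deriv f m = 0 := by
    rcases eq_endpoints_or_mem_Ioo_of_mem_Icc hm with rfl | rfl | hm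
    exacts [hu, hv, (hmin.isLocalMin (Icc_mem_nhds hm.1 hm.2)).deriv_eq_zero]
  have lt_near := eventually_lt_of_deriv_deriv_neg (hf m (Icc_subset hm)) deriv_m
    (hneg m (Icc_subset hm) deriv_m)
  have accPt : AccPt m (𝓟 (Icc u v)) := isPreconnected_Icc.preperfect_of_nontrivial
    ⟨u, left_mem_Icc.2 huv.le, v, right_mem_Icc.2 huv.le, hne⟩ m hm
  obtain ⟨t, ⟨htm, ht⟩, hlt⟩ :=
    ((accPt_iff_frequently.1 accPt).and_eventually (eventually_nhdsWithin_iff.1 lt_near)).exists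
  exact (hlt htm).not_ge (hmin ht)

end RealVariable

/-! ### Restriction to the real axis -/

lemma fderiv_eq_zero_iff_deriv_ofReal_eq_zero {u : ℂ → ℝ} {a : ℝ} (hu : DifferentiableAt ℝ u a)
    (hconj : ∀ᶠ z in 𝓝 (a : ℂ), u (conj z) = u z) :
    fderiv ℝ u a = 0 ↔ deriv (fun t : ℝ ↦ u t) a = 0 := by
  have deriv_eq : deriv (fun t : ℝ ↦ u t) a = fderiv ℝ u a 1 := by
    simpa [Function.comp_def] using (hu.hasFDerivAt.comp_hasDerivAt a ofRealCLM.hasDerivAt).deriv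
  have fderiv_I : fderiv ℝ u a I = 0 := by
    have fderiv_comp_conj : fderiv ℝ u a = (fderiv ℝ u a).comp (conjCLE : ℂ →L[ℝ] ℂ) := by
      have hu' : HasFDerivAt u (fderiv ℝ u a) (conjCLE a) := by simpa using hu.hasFDerivAt
      exact hu.hasFDerivAt.unique
        ((hu'.comp _ conjCLE.hasFDerivAt).congr_of_eventuallyEq (hconj.mono fun z hz ↦ hz.symm))
    have fderiv_I_eq_neg : fderiv ℝ u a I = -fderiv ℝ u a I := by
      simpa using congrArg (· I) fderiv_comp_conj
    linarith
  rw [deriv_eq]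
  refine ⟨fun h ↦ by simp [h], fun h ↦ ?_⟩
  ext z
  have z_eq : z = z.re • (1 : ℂ) + z.im • I := by simp
  rw [z_eq, map_add, map_smul, map_smul, h, fderiv_I]
  simp

lemma exists_image_ofReal_eq_connectedComponentIn {U : Set ℂ} (hU : IsOpen U) {x : ℂ}
    (hx : x ∈ U ∩ im ⁻¹' {0}) :
    ∃ J : Set ℝ, IsOpen J ∧ J.OrdConnected ∧
      ofReal '' J = connectedComponentIn (U ∩ im ⁻¹' {0}) x := by
  obtain ⟨a, rfl⟩ : ∃ a : ℝ, (a : ℂ) = x := ⟨x.re, Complex.ext rfl hx.2.symm⟩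
  have preimage_eq : ofReal ⁻¹' (U ∩ im ⁻¹' {0}) = ofReal ⁻¹' U := by ext t; simp
  refine ⟨connectedComponentIn (ofReal ⁻¹' U) a,
    (hU.preimage continuous_ofReal).connectedComponentIn,
    isPreconnected_connectedComponentIn.ordConnected, ?_⟩
  rw [← preimage_eq]
  exact image_connectedComponentIn_preimage isometry_ofReal.isUniformInducing.isInducing
    (fun z hz ↦ ⟨z.re, Complex.ext rfl hz.2.symm⟩) hx

/-! ### Condenser potentials -/

/-- `G` is the potential of the condenser `(Ω, E)`, i.e. the harmonic measure of `∂Ω` in `Ω \ E`,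
with continuous boundary values `1` on the outer plate `∂Ω` and `0` on the inner plate `E`. -/
structure IsCondenserPotential (Ω E : Set ℂ) (G : ℂ → ℝ) : Prop where
  continuousOn : ContinuousOn G (closure Ω)
  eq_one : ∀ z ∈ frontier Ω, G z = 1
  eq_zero : ∀ z ∈ E, G z = 0
  harmonicOnNhd : HarmonicOnNhd G (Ω \ E)

namespace IsCondenserPotential

variable {Ω E : Set ℂ} {G G' : ℂ → ℝ}

lemma nonneg (hG : IsCondenserPotential Ω E G) (hΩ : IsOpen Ω) (hb : Bornology.IsBounded Ω) :
    ∀ z ∈ Ω, 0 ≤ G z :=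
  le_of_harmonicOnNhd_of_le_frontier hΩ hb hG.continuousOn hG.harmonicOnNhd
    (fun z hz ↦ (hG.eq_zero z hz.2).ge) (fun z hz ↦ (hG.eq_one z hz).symm ▸ zero_le_one)

lemma le_one (hG : IsCondenserPotential Ω E G) (hΩ : IsOpen Ω) (hb : Bornology.IsBounded Ω) :
    ∀ z ∈ Ω, G z ≤ 1 :=
  le_of_harmonicOnNhd_of_frontier_le hΩ hb hG.continuousOn hG.harmonicOnNhd
    (fun z hz ↦ (hG.eq_zero z hz.2).symm ▸ zero_le_one) (fun z hz ↦ (hG.eq_one z hz).le)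

lemma lt_one (hG : IsCondenserPotential Ω E G) (hΩ : IsOpen Ω) (hb : Bornology.IsBounded Ω)
    (hΩc : IsPreconnected Ω) (hE : (Ω ∩ E).Nonempty) : ∀ z ∈ Ω, G z < 1 := by
  have lt_one_of_mem (z : ℂ) (hz : z ∈ Ω ∩ E) : G z < 1 := hG.eq_zero z hz.2 ▸ zero_lt_one
  exact lt_of_harmonicOnNhd_of_le hΩ hΩc (hG.continuousOn.mono subset_closure) hG.harmonicOnNhd
    lt_one_of_mem (hG.le_one hΩ hb) (hE.imp fun z hz ↦ ⟨hz.1, lt_one_of_mem z hz⟩)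

/- Near a zero off `E` the potential would vanish identically, so the frontier of its zero set
would be contained in `E`. -/
lemma pos (hG : IsCondenserPotential Ω E G) (hΩ : IsOpen Ω) (hb : Bornology.IsBounded Ω)
    (hEreal : ∀ z ∈ E, z.im = 0) : ∀ z ∈ Ω \ E, 0 < G z := by
  set Z := closure Ω ∩ G ⁻¹' {0}
  have isClosed_Z : IsClosed Z :=
    hG.continuousOn.preimage_isClosed_of_isClosed isClosed_closure isClosed_singleton
  have Z_mem_nhds (z : ℂ) (hz : z ∈ Ω \ E) (hGz : G z = 0) : Z ∈ 𝓝 z := by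
    have isLocalMax_neg : IsLocalMax (-G) z := by
      filter_upwards [hΩ.mem_nhds hz.1] with w hw
      simpa [hGz] using hG.nonneg hΩ hb w hw
    filter_upwards [hΩ.mem_nhds hz.1, eventually_eq_of_isLocalMax_of_harmonicAt
      (hG.harmonicOnNhd z hz).neg isLocalMax_neg] with w hwΩ hw
    exact ⟨subset_closure hwΩ, by simpa [hGz] using hw⟩
  have frontier_Z (z : ℂ) (hz : z ∈ frontier Z) : z.im = 0 := by
    obtain ⟨z_mem_closure, hGz⟩ := isClosed_Z.frontier_subset hz
    have hzΩ : z ∈ Ω := by_contra fun hzΩ ↦ by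
      simp [hG.eq_one z (hΩ.frontier_eq ▸ ⟨z_mem_closure, hzΩ⟩)] at hGz
    exact hEreal z <| by_contra fun hzE ↦
      hz.2 (mem_interior_iff_mem_nhds.2 (Z_mem_nhds z ⟨hzΩ, hzE⟩ hGz))
  intro z hz
  refine (hG.nonneg hΩ hb z hz.1).lt_of_ne fun hGz ↦ ?_
  have z_mem_interior := mem_interior_iff_mem_nhds.2 (Z_mem_nhds z hz hGz.symm)
  rw [interior_eq_empty_of_frontier_im_eq_zero
    (hb.isCompact_closure.of_isClosed_subset isClosed_Z inter_subset_left) frontier_Z]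
    at z_mem_interior
  exact z_mem_interior

lemma eqOn (hG : IsCondenserPotential Ω E G) (hG' : IsCondenserPotential Ω E G') (hΩ : IsOpen Ω)
    (hb : Bornology.IsBounded Ω) : EqOn G G' Ω := by
  have continuousOn_sub := hG.continuousOn.sub hG'.continuousOn
  have harmonic_sub := hG.harmonicOnNhd.sub hG'.harmonicOnNhd
  have sub_eq_zero_of_mem (z : ℂ) (hz : z ∈ Ω ∩ E) : (G - G') z = 0 := by
    simp [hG.eq_zero z hz.2, hG'.eq_zero z hz.2]
  have sub_eq_zero_of_mem_frontier (z : ℂ) (hz : z ∈ frontier Ω) : (G - G') z = 0 := by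
    simp [hG.eq_one z hz, hG'.eq_one z hz]
  intro z hz
  apply sub_eq_zero.1
  exact le_antisymm
    (le_of_harmonicOnNhd_of_frontier_le hΩ hb continuousOn_sub harmonic_sub
      (fun w hw ↦ (sub_eq_zero_of_mem w hw).le) (fun w hw ↦ (sub_eq_zero_of_mem_frontier w hw).le)
      z hz)
    (le_of_harmonicOnNhd_of_le_frontier hΩ hb continuousOn_sub harmonic_sub
      (fun w hw ↦ (sub_eq_zero_of_mem w hw).ge) (fun w hw ↦ (sub_eq_zero_of_mem_frontier w hw).ge)
      z hz)

lemma comp_linearIsometryEquiv (hG : IsCondenserPotential Ω E G) (l : ℂ ≃ₗᵢ[ℝ] ℂ) :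
    IsCondenserPotential (l ⁻¹' Ω) (l ⁻¹' E) (G ∘ l) where
  continuousOn := hG.continuousOn.comp l.continuous.continuousOn
    (l.toHomeomorph.preimage_closure Ω).ge
  eq_one z hz := hG.eq_one (l z) ((l.toHomeomorph.preimage_frontier Ω).ge hz)
  eq_zero z hz := hG.eq_zero (l z) hz
  harmonicOnNhd z hz := harmonicAt_comp_linearIsometryEquiv l (hG.harmonicOnNhd (l z) hz)

lemma apply_conj (hG : IsCondenserPotential Ω E G) (hΩ : IsOpen Ω) (hb : Bornology.IsBounded Ω)
    (hΩconj : MapsTo conj Ω Ω) (hEreal : ∀ z ∈ E, z.im = 0) {z : ℂ} (hz : z ∈ Ω) :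
    G (conj z) = G z := by
  have preimage_Ω : conjLIE ⁻¹' Ω = Ω :=
    Subset.antisymm (fun w hw ↦ by simpa using hΩconj hw) hΩconj
  have preimage_E : conjLIE ⁻¹' E = E := by
    ext w
    by_cases hw : w.im = 0
    · simp [conj_eq_iff_im.2 hw]
    · exact iff_of_false (fun h ↦ hw (by simpa using hEreal _ h)) fun h ↦ hw (hEreal w h)
  have hG_conj := hG.comp_linearIsometryEquiv conjLIE
  rw [preimage_Ω, preimage_E] at hG_conj
  exact hG_conj.eqOn hG hΩ hb hz

/- `G + ε Re (z - a)²` has the symmetry, and for small `ε` the bounds on the plates, that exclude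
a valley at `a`. -/
lemma exists_pos_frequently_add_mul_sq_le (hG : IsCondenserPotential Ω E G)
    (hΩ : IsConjInvariantDomain Ω) (hEc : IsClosed E) (hE : (Ω ∩ E).Nonempty)
    (hEreal : ∀ z ∈ E, z.im = 0) {a : ℝ} (ha : (a : ℂ) ∈ Ω \ E) :
    ∃ ε > 0, ∃ᶠ t : ℝ in 𝓝[≠] a, G t + ε * (t - a) ^ 2 ≤ G a := by
  have Ga_pos : 0 < G a := hG.pos hΩ.isOpen hΩ.isBounded hEreal a ha
  have Ga_lt_one : G a < 1 := hG.lt_one hΩ.isOpen hΩ.isBounded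
    hΩ.isSimplyConnected.isPathConnected.isConnected.isPreconnected hE a ha.1
  obtain ⟨δ, δ_pos, hδ⟩ := exists_between (lt_min Ga_pos (sub_pos.2 Ga_lt_one))
  obtain ⟨δ_lt, δ_lt'⟩ := lt_min_iff.1 hδ
  obtain ⟨ε, ε_pos, hε⟩ : ∃ ε > 0, ∀ z ∈ closure Ω, |ε * ((z - a) ^ 2).re| < δ := by
    exact exists_pos_forall_abs_mul_lt hΩ.isBounded.isCompact_closure
      (f := fun z ↦ ((z - a) ^ 2).re) (by fun_prop) δ_pos
  let H : ℂ → ℝ := fun z ↦ G z + ε * ((z - a) ^ 2).re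
  have H_a : H a = G a := by simp [H]
  have harmonic_H : HarmonicOnNhd H (Ω \ E) := fun z hz ↦ (hG.harmonicOnNhd z hz).add
    (HarmonicAt.const_smul (c := ε) (AnalyticAt.harmonicAt_re (f := fun z ↦ (z - a) ^ 2)
      (by fun_prop)))
  have H_conj (z : ℂ) (hz : z ∈ Ω) : H (conj z) = H z := by
    have : (conj z - a) ^ 2 = conj ((z - a) ^ 2) := by simp
    simp only [H, this, conj_re, hG.apply_conj hΩ.isOpen hΩ.isBounded hΩ.mapsTo_conj hEreal hz]
  refine ⟨ε, ε_pos, ?_⟩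
  have := frequently_le_of_forall_mem_le (H := H) (M := 1 - δ) hΩ hEreal
    (hG.continuousOn.add (by fun_prop)) harmonic_H H_conj hEc ha
    (fun z hz ↦ ?_) (fun z hz ↦ ?_) (by linarith)
  · refine this.mono fun t ht ↦ ?_
    simpa [H, H_a, ← ofReal_sub, ← ofReal_pow] using ht
  · have := abs_lt.1 (hε z (subset_closure hz.1))
    simp only [H_a, H, hG.eq_zero z hz.2]
    linarith
  · have := abs_lt.1 (hε z (frontier_subset_closure hz))
    simp only [H, hG.eq_one z hz]
    linarith

lemma contDiffAt_ofReal (hG : IsCondenserPotential Ω E G) {a : ℝ} (ha : (a : ℂ) ∈ Ω \ E) :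
    ContDiffAt ℝ 2 (fun t : ℝ ↦ G t) a :=
  (hG.harmonicOnNhd a ha).1.comp a ofRealCLM.contDiff.contDiffAt

lemma deriv_deriv_neg (hG : IsCondenserPotential Ω E G) (hΩ : IsConjInvariantDomain Ω)
    (hEc : IsClosed E) (hE : (Ω ∩ E).Nonempty) (hEreal : ∀ z ∈ E, z.im = 0) {a : ℝ}
    (ha : (a : ℂ) ∈ Ω \ E) (hd : deriv (fun t : ℝ ↦ G t) a = 0) :
    deriv (deriv fun t : ℝ ↦ G t) a < 0 := by
  obtain ⟨ε, ε_pos, hε⟩ := hG.exists_pos_frequently_add_mul_sq_le hΩ hEc hE hEreal ha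
  by_contra! nonneg
  have quadratic_le := eventually_add_mul_sq_le_of_deriv_deriv_gt (c := -ε / 2)
    (hG.contDiffAt_ofReal ha) hd (by linarith)
  obtain ⟨t, le_Ga, ge_Ga, hta⟩ := (hε.and_eventually
    ((quadratic_le.filter_mono nhdsWithin_le_nhds).and self_mem_nhdsWithin)).exists
  have : 0 < (t - a) ^ 2 := sq_pos_of_ne_zero (sub_ne_zero.2 hta)
  nlinarith

lemma fderiv_eq_zero_iff (hG : IsCondenserPotential Ω E G) (hΩ : IsConjInvariantDomain Ω)
    (hEreal : ∀ z ∈ E, z.im = 0) {a : ℝ} (ha : (a : ℂ) ∈ Ω \ E) :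
    fderiv ℝ G a = 0 ↔ deriv (fun t : ℝ ↦ G t) a = 0 :=
  fderiv_eq_zero_iff_deriv_ofReal_eq_zero
    ((hG.harmonicOnNhd a ha).1.differentiableAt two_ne_zero)
    (eventually_of_mem (hΩ.isOpen.mem_nhds ha.1) fun _ hz ↦
      hG.apply_conj hΩ.isOpen hΩ.isBounded hΩ.mapsTo_conj hEreal hz)

lemma exists_mem_deriv_eq_zero (hG : IsCondenserPotential Ω E G) (hΩ : IsOpen Ω)
    (hb : Bornology.IsBounded Ω) (hEreal : ∀ z ∈ E, z.im = 0) {J : Set ℝ} (hJ : IsOpen J)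
    (hJne : J.Nonempty) (hJE : MapsTo ofReal J (Ω \ E)) (hcl : closure (ofReal '' J) ⊆ Ω)
    (hends : closure (ofReal '' J) \ ofReal '' J ⊆ E) :
    ∃ t ∈ J, deriv (fun t : ℝ ↦ G t) t = 0 := by
  obtain ⟨x, hx⟩ := hJne
  have isCompact_closure : IsCompact (closure (ofReal '' J)) :=
    (hb.subset (subset_closure.trans hcl)).isCompact_closure
  obtain ⟨_, ⟨t, ht, rfl⟩, hmax⟩ := isCompact_closure.exists_isMaxOn_mem_subset
    (hG.continuousOn.mono (hcl.trans subset_closure)) (subset_closure (mem_image_of_mem _ hx))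
    fun z hz ↦ hG.eq_zero z (hends hz) ▸ hG.pos hΩ hb hEreal x (hJE hx)
  have isLocalMax_t : IsLocalMax (fun t : ℝ ↦ G t) t := by
    filter_upwards [hJ.mem_nhds ht] with s hs
    exact hmax (subset_closure (mem_image_of_mem _ hs))
  exact ⟨t, ht, isLocalMax_t.deriv_eq_zero⟩

lemma existsUnique_mem_deriv_eq_zero (hG : IsCondenserPotential Ω E G)
    (hΩ : IsConjInvariantDomain Ω) (hEc : IsClosed E) (hE : (Ω ∩ E).Nonempty)
    (hEreal : ∀ z ∈ E, z.im = 0) {J : Set ℝ} (hJ : IsOpen J) (hJc : J.OrdConnected)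
    (hJne : J.Nonempty) (hJE : MapsTo ofReal J (Ω \ E)) (hcl : closure (ofReal '' J) ⊆ Ω)
    (hends : closure (ofReal '' J) \ ofReal '' J ⊆ E) :
    ∃! t, t ∈ J ∧ deriv (fun t : ℝ ↦ G t) t = 0 := by
  obtain ⟨a, ha⟩ :=
    hG.exists_mem_deriv_eq_zero hΩ.isOpen hΩ.isBounded hEreal hJ hJne hJE hcl hends
  refine ⟨a, ha, fun b hb ↦ subsingleton_deriv_eq_zero_of_deriv_deriv_neg hJc
    (fun t ht ↦ hG.contDiffAt_ofReal (hJE ht))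
    (fun t ht ↦ hG.deriv_deriv_neg hΩ hEc hE hEreal (hJE ht)) hb ha⟩

end IsCondenserPotential

/-- **Theorem 7.2 (ii).** Each proper complementary interval contains exactly
one critical point of the Green-type function `G`; it is simple, i.e. a
nondegenerate (strict) local maximum of `G` along `ℝ`. -/
theorem green_function_unique_simple_critical_point_in_complementary_interval
    (Ω : Set ℂ) (hΩopen : IsOpen Ω) (hΩbdd : Bornology.IsBounded Ω)
    (hΩsc : SimplyConnectedSpace Ω)
    (hΩconj : (fun z => (starRingEnd ℂ) z) '' Ω = Ω)
    (E : Set ℂ) (hEne : E.Nonempty) (hEcpt : IsCompact E)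
    (hEsub : E ⊆ Ω) (hEreal : ∀ z ∈ E, z.im = 0)
    (G : ℂ → ℝ) (hGcont : ContinuousOn G (closure Ω))
    (hGbdry : ∀ z ∈ frontier Ω, G z = 1)
    (hGzero : ∀ z ∈ E, G z = 0)
    (hGharm : IsHarmonicOn G (Ω \ E))
    (I : Set ℂ) (x : ℂ) (hxI : x ∈ I)
    (hIcomp : I = connectedComponentIn ({z ∈ Ω | z.im = 0} \ E) x)
    (hIbdd : Bornology.IsBounded I)
    (hIcl : closure I ⊆ Ω)
    (hIends : closure I \ I ⊆ E) :
    ∃ ω ∈ I, fderiv ℝ G ω = 0 ∧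
      deriv (deriv (fun t : ℝ => G (ω + (t : ℂ)))) 0 < 0 ∧
      ∀ ω' ∈ I, fderiv ℝ G ω' = 0 → ω' = ω := by
  have hΩ : IsConjInvariantDomain Ω :=
    ⟨hΩopen, hΩbdd, hΩsc, fun z hz ↦ hΩconj.subset (mem_image_of_mem _ hz)⟩
  have hE : (Ω ∩ E).Nonempty := hEne.mono fun z hz ↦ ⟨hEsub hz, hz⟩
  have isOpen_sdiff : IsOpen (Ω \ E) := hΩopen.sdiff hEcpt.isClosed
  have hG : IsCondenserPotential Ω E G :=
    ⟨hGcont, hGbdry, hGzero, hGharm.harmonicOnNhd isOpen_sdiff⟩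
  have real_part_eq : {z ∈ Ω | z.im = 0} \ E = (Ω \ E) ∩ im ⁻¹' {0} := inter_sdiff_right_comm
  have I_subset : I ⊆ (Ω \ E) ∩ im ⁻¹' {0} :=
    hIcomp.subset.trans (real_part_eq ▸ connectedComponentIn_subset _ _)
  obtain ⟨J, isOpen_J, ordConnected_J, hJ⟩ :=
    exists_image_ofReal_eq_connectedComponentIn isOpen_sdiff (I_subset hxI)
  obtain rfl : I = ofReal '' J := by rw [hIcomp, real_part_eq, hJ]
  have hJE : MapsTo ofReal J (Ω \ E) := fun t ht ↦ (I_subset (mem_image_of_mem _ ht)).1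
  obtain ⟨a, ⟨ha, deriv_a⟩, unique⟩ := hG.existsUnique_mem_deriv_eq_zero hΩ hEcpt.isClosed hE
    hEreal isOpen_J ordConnected_J (image_nonempty.1 ⟨x, hxI⟩) hJE hIcl hIends
  have deriv_shift : deriv (deriv fun t : ℝ ↦ G (a + t)) 0 = deriv (deriv fun t : ℝ ↦ G t) a := by
    simpa using deriv_deriv_comp_const_add (fun t : ℝ ↦ G t) a 0
  refine ⟨a, mem_image_of_mem _ ha, (hG.fderiv_eq_zero_iff hΩ hEreal (hJE ha)).2 deriv_a,
    deriv_shift ▸ hG.deriv_deriv_neg hΩ hEcpt.isClosed hE hEreal (hJE ha) deriv_a, ?_⟩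
  rintro _ ⟨b, hb, rfl⟩ fderiv_b
  exact congrArg _ (unique b ⟨hb, (hG.fderiv_eq_zero_iff hΩ hEreal (hJE hb)).1 fderiv_b⟩)
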